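/- Fix a node i, a number of layers L ≥ 0, weight vectors w^{(0)}, …, w^{(L)} ∈ ℝ^d, and M ≥ 0, and suppose ⟨X_j, w^{(l)}⟩ is square-integrable with Var[⟨X_j, w^{(l)}⟩] ≤ M for all nodes j and all 0 ≤ l ≤ L. Define Z = Σ_{l=0}^{L} Σ_{j=1}^{N} (P_sym^l)_{ij} ⟨X_j, w^{(l)}⟩, the degree-discounted l-hop prediction homogeneity β̃^{(l)} = Σ_{j=1}^{N} (P_rw^l)_{ij} D_{jj}^{-1/2} E[⟨X_j, w^{(l)}⟩], and the degree-discounted sum of collision probabilities α̃^{(l)} = Σ_{j=1}^{N} D_{jj}^{-1} ((P_rw^l)_{ij})². Then E[Z] = √(D_{ii}) Σ_{l=0}^{L} β̃^{(l)}, Var[Z] ≤ D_{ii} M (L+1) Σ_{l=0}^{L} α̃^{(l)}, and consequently, if M > 0 and Var[Z] > 0, then R = (E[Z])² / Var[Z] ≥ (Σ_{l=0}^{L} β̃^{(l)})² / (M (L+1) Σ_{l=0}^{L} α̃^{(l)}). -/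

import Mathlib

open MeasureTheory ProbabilityTheory Finset

/-!
Conjugation by `D^{1/2}` carries `P_rw` to `P_sym`, so `(P_sym^l)_{ij} = √D_i (P_rw^l)_{ij} / √D_j`
at every power. Linearity of expectation then turns `E[Z]` into `√D_i ∑ β̃^{(l)}`. For the variance,
Cauchy–Schwarz over the `L + 1` hops costs the factor `L + 1`; within one hop the scores of
distinct nodes are uncorrelated, so only `M ∑ⱼ (P_sym^l)_{ij}² = M D_i α̃^{(l)}` remains.
-/

section Variance

variable {Ω κ : Type*} [MeasurableSpace Ω] {μ : Measure Ω}

theorem pairwise_uncorrelated_comp_of_iIndepFun {E : Type*} [MeasurableSpace E]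
    {X : κ → Ω → E} (hX : iIndepFun X μ) {f : E → ℝ} (hf : Measurable f)
    (hfX : ∀ k, MemLp (fun ω ↦ f (X k ω)) 2 μ) :
    Pairwise fun k k' ↦ cov[fun ω ↦ f (X k ω), fun ω ↦ f (X k' ω); μ] = 0 :=
  fun k k' hne ↦ ((hX.indepFun hne).comp hf hf).covariance_eq_zero (hfX k) (hfX k')

variable [IsFiniteMeasure μ]

theorem covariance_le_half_add_variance {X Y : Ω → ℝ} (hX : MemLp X 2 μ) (hY : MemLp Y 2 μ) :
    cov[X, Y; μ] ≤ (Var[X; μ] + Var[Y; μ]) / 2 := by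
  linarith [variance_nonneg (X - Y) μ, variance_sub hX hY]

theorem variance_fun_sum_le_card_mul_sum {s : Finset κ} {X : κ → Ω → ℝ}
    (hX : ∀ k ∈ s, MemLp (X k) 2 μ) :
    Var[fun ω ↦ ∑ k ∈ s, X k ω; μ] ≤ #s * ∑ k ∈ s, Var[X k; μ] := by
  calc Var[fun ω ↦ ∑ k ∈ s, X k ω; μ]
      = ∑ k ∈ s, ∑ k' ∈ s, cov[X k, X k'; μ] := variance_fun_sum' hX
    _ ≤ ∑ k ∈ s, ∑ k' ∈ s, (Var[X k; μ] + Var[X k'; μ]) / 2 :=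
        sum_le_sum fun k hk ↦ sum_le_sum fun k' hk' ↦
          covariance_le_half_add_variance (hX k hk) (hX k' hk')
    _ = #s * ∑ k ∈ s, Var[X k; μ] := by
        simp only [← sum_div, sum_add_distrib, sum_const, nsmul_eq_mul, ← mul_sum]
        ring

theorem variance_fun_sum_of_pairwise_uncorrelated {s : Finset κ} {X : κ → Ω → ℝ}
    (hX : ∀ k ∈ s, MemLp (X k) 2 μ)
    (huncorr : (s : Set κ).Pairwise fun k k' ↦ cov[X k, X k'; μ] = 0) :
    Var[fun ω ↦ ∑ k ∈ s, X k ω; μ] = ∑ k ∈ s, Var[X k; μ] := by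
  rw [variance_fun_sum' hX]
  refine sum_congr rfl fun k hk ↦ ?_
  rw [sum_eq_single_of_mem k hk fun k' hk' hne ↦ huncorr hk hk' hne.symm,
    covariance_self (hX k hk).aemeasurable]

theorem variance_fun_sum_mul_le_mul_sum_sq {s : Finset κ} {X : κ → Ω → ℝ} {M : ℝ}
    (hX : ∀ k ∈ s, MemLp (X k) 2 μ)
    (huncorr : (s : Set κ).Pairwise fun k k' ↦ cov[X k, X k'; μ] = 0)
    (hvar : ∀ k ∈ s, Var[X k; μ] ≤ M) (c : κ → ℝ) :
    Var[fun ω ↦ ∑ k ∈ s, c k * X k ω; μ] ≤ M * ∑ k ∈ s, c k ^ 2 := by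
  have huncorr_mul : (s : Set κ).Pairwise fun k k' ↦
      cov[fun ω ↦ c k * X k ω, fun ω ↦ c k' * X k' ω; μ] = 0 := fun k hk k' hk' hne ↦ by
    simp only [covariance_const_mul_left, covariance_const_mul_right, huncorr hk hk' hne,
      mul_zero]
  calc Var[fun ω ↦ ∑ k ∈ s, c k * X k ω; μ]
      = ∑ k ∈ s, c k ^ 2 * Var[X k; μ] := by
        rw [variance_fun_sum_of_pairwise_uncorrelated (fun k hk ↦ (hX k hk).const_mul (c k))
          huncorr_mul]
        simp only [variance_const_mul]
    _ ≤ ∑ k ∈ s, c k ^ 2 * M := by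
        gcongr with k hk
        exact hvar k hk
    _ = M * ∑ k ∈ s, c k ^ 2 := by rw [← sum_mul, mul_comm]

end Variance

section Normalization

variable {ι : Type*}

/-- The random-walk normalization `D⁻¹ A` of a weighted adjacency matrix `A`. The diagonal `D` is
an arbitrary vector of node weights, so that it need not consist of the row sums of `A`. -/
noncomputable def randomWalkMatrix (A : Matrix ι ι ℝ) (D : ι → ℝ) : Matrix ι ι ℝ :=
  .of fun i j ↦ A i j / D i

/-- The symmetric normalization `D^{-1/2} A D^{-1/2}` of a weighted adjacency matrix `A`, for the
same arbitrary node weights `D` as in `randomWalkMatrix`. -/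
noncomputable def symNormMatrix (A : Matrix ι ι ℝ) (D : ι → ℝ) : Matrix ι ι ℝ :=
  .of fun i j ↦ A i j / (√(D i) * √(D j))

variable [Fintype ι] [DecidableEq ι] {A : Matrix ι ι ℝ} {D : ι → ℝ}

/-- The degree-discounted `l`-hop prediction homogeneity `β̃^{(l)}` at node `i`, where `m j` is the
mean score of node `j`. -/
noncomputable def discountedHomogeneity (A : Matrix ι ι ℝ) (D : ι → ℝ) (i : ι) (l : ℕ)
    (m : ι → ℝ) : ℝ :=
  ∑ j, (randomWalkMatrix A D ^ l) i j * (√(D j))⁻¹ * m j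

/-- The degree-discounted sum `α̃^{(l)}` of collision probabilities of two independent `l`-step
random walks started at node `i`. -/
noncomputable def discountedCollision (A : Matrix ι ι ℝ) (D : ι → ℝ) (i : ι) (l : ℕ) : ℝ :=
  ∑ j, (D j)⁻¹ * (randomWalkMatrix A D ^ l) i j ^ 2

theorem semiconjBy_randomWalkMatrix_symNormMatrix (hD : ∀ j, 0 < D j) :
    SemiconjBy (Matrix.diagonal fun j ↦ √(D j)) (randomWalkMatrix A D) (symNormMatrix A D) := by
  ext i j
  have hi : √(D i) ≠ 0 := (Real.sqrt_pos.2 (hD i)).ne'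
  have hj : √(D j) ≠ 0 := (Real.sqrt_pos.2 (hD j)).ne'
  rw [Matrix.diagonal_mul, Matrix.mul_diagonal, randomWalkMatrix, symNormMatrix, Matrix.of_apply,
    Matrix.of_apply]
  nth_rw 2 [← Real.mul_self_sqrt (hD i).le]
  field_simp

theorem symNormMatrix_pow_apply (hD : ∀ j, 0 < D j) (l : ℕ) (i j : ι) :
    (symNormMatrix A D ^ l) i j = √(D i) * (randomWalkMatrix A D ^ l) i j * (√(D j))⁻¹ := by
  have hpow := congr_fun₂ ((semiconjBy_randomWalkMatrix_symNormMatrix (A := A) hD).pow_right l) i j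
  rw [Matrix.diagonal_mul, Matrix.mul_diagonal] at hpow
  rw [eq_mul_inv_iff_mul_eq₀ (Real.sqrt_pos.2 (hD j)).ne', hpow]

theorem sum_symNormMatrix_pow_mul (hD : ∀ j, 0 < D j) (i : ι) (l : ℕ) (m : ι → ℝ) :
    ∑ j, (symNormMatrix A D ^ l) i j * m j = √(D i) * discountedHomogeneity A D i l m := by
  simp only [symNormMatrix_pow_apply hD, discountedHomogeneity, mul_sum, mul_assoc]

theorem sum_symNormMatrix_pow_sq (hD : ∀ j, 0 < D j) (i : ι) (l : ℕ) :
    ∑ j, (symNormMatrix A D ^ l) i j ^ 2 = D i * discountedCollision A D i l := by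
  rw [discountedCollision, mul_sum]
  refine sum_congr rfl fun j _ ↦ ?_
  rw [symNormMatrix_pow_apply hD, mul_pow, mul_pow, inv_pow, Real.sq_sqrt (hD i).le,
    Real.sq_sqrt (hD j).le]
  ring

end Normalization

section GraphFilter

variable {Ω ι : Type*} [Fintype ι] [DecidableEq ι]

/-- The output at node `i` of the polynomial graph filter with shift matrix `P` and set of hops `s`,
where `Y l j` is the random score that node `j` contributes at hop `l`. A linearized `L`-layer
network is the case `s = range (L + 1)`, `Y l j = ⟨X_j, w^{(l)}⟩`. -/
def graphFilterOutput (P : Matrix ι ι ℝ) (s : Finset ℕ) (Y : ℕ → ι → Ω → ℝ) (i : ι) (ω : Ω) : ℝ :=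
  ∑ l ∈ s, ∑ j, (P ^ l) i j * Y l j ω

variable [MeasurableSpace Ω] {μ : Measure Ω} {s : Finset ℕ} {Y : ℕ → ι → Ω → ℝ}

theorem integral_graphFilterOutput (P : Matrix ι ι ℝ) (i : ι)
    (hY : ∀ l ∈ s, ∀ j, Integrable (Y l j) μ) :
    ∫ ω, graphFilterOutput P s Y i ω ∂μ = ∑ l ∈ s, ∑ j, (P ^ l) i j * ∫ ω, Y l j ω ∂μ := by
  have hterm : ∀ l ∈ s, ∀ j ∈ univ, Integrable (fun ω ↦ (P ^ l) i j * Y l j ω) μ :=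
    fun l hl j _ ↦ (hY l hl j).const_mul _
  simp only [graphFilterOutput]
  rw [integral_finsetSum _ fun l hl ↦ integrable_finsetSum _ (hterm l hl)]
  refine sum_congr rfl fun l hl ↦ ?_
  simp only [integral_finsetSum _ (hterm l hl), integral_const_mul]

theorem variance_graphFilterOutput_le [IsFiniteMeasure μ] {M : ℝ} (P : Matrix ι ι ℝ) (i : ι)
    (hY : ∀ l ∈ s, ∀ j, MemLp (Y l j) 2 μ)
    (huncorr : ∀ l ∈ s, Pairwise fun j j' ↦ cov[Y l j, Y l j'; μ] = 0)
    (hvar : ∀ l ∈ s, ∀ j, Var[Y l j; μ] ≤ M) :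
    Var[graphFilterOutput P s Y i; μ] ≤ #s * ∑ l ∈ s, M * ∑ j, (P ^ l) i j ^ 2 := by
  have hhop : ∀ l ∈ s, MemLp (fun ω ↦ ∑ j, (P ^ l) i j * Y l j ω) 2 μ :=
    fun l hl ↦ memLp_finsetSum _ fun j _ ↦ (hY l hl j).const_mul _
  refine (variance_fun_sum_le_card_mul_sum hhop).trans ?_
  gcongr with l hl
  exact variance_fun_sum_mul_le_mul_sum_sq (fun j _ ↦ hY l hl j)
    ((huncorr l hl).set_pairwise _) (fun j _ ↦ hvar l hl j) _

theorem sym_inverse_cv_bound_general [IsFiniteMeasure μ] {A : Matrix ι ι ℝ} {D : ι → ℝ} {M : ℝ}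
    (hD : ∀ j, 0 < D j) (i : ι)
    (hY : ∀ l ∈ s, ∀ j, MemLp (Y l j) 2 μ)
    (huncorr : ∀ l ∈ s, Pairwise fun j j' ↦ cov[Y l j, Y l j'; μ] = 0)
    (hvar : ∀ l ∈ s, ∀ j, Var[Y l j; μ] ≤ M) :
    let Z := graphFilterOutput (symNormMatrix A D) s Y i
    let β := fun l ↦ discountedHomogeneity A D i l fun j ↦ ∫ ω, Y l j ω ∂μ
    let α := discountedCollision A D i
    ∫ ω, Z ω ∂μ = √(D i) * ∑ l ∈ s, β l ∧
    Var[Z; μ] ≤ D i * M * #s * ∑ l ∈ s, α l ∧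
    (0 < Var[Z; μ] →
      (∫ ω, Z ω ∂μ) ^ 2 / Var[Z; μ] ≥ (∑ l ∈ s, β l) ^ 2 / (M * #s * ∑ l ∈ s, α l)) := by
  intro Z β α
  have hmean : ∫ ω, Z ω ∂μ = √(D i) * ∑ l ∈ s, β l := by
    rw [integral_graphFilterOutput _ _ fun l hl j ↦ (hY l hl j).integrable one_le_two, mul_sum]
    exact sum_congr rfl fun l _ ↦ sum_symNormMatrix_pow_mul hD i l _
  have hVar : Var[Z; μ] ≤ D i * (M * #s * ∑ l ∈ s, α l) := by
    refine (variance_graphFilterOutput_le _ i hY huncorr hvar).trans_eq ?_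
    simp only [sum_symNormMatrix_pow_sq hD, ← mul_sum, α]
    ring
  refine ⟨hmean, hVar.trans_eq (by ring), fun hpos ↦ ?_⟩
  calc (∑ l ∈ s, β l) ^ 2 / (M * #s * ∑ l ∈ s, α l)
      = D i * (∑ l ∈ s, β l) ^ 2 / (D i * (M * #s * ∑ l ∈ s, α l)) :=
        (mul_div_mul_left _ _ (hD i).ne').symm
    _ ≤ D i * (∑ l ∈ s, β l) ^ 2 / Var[Z; μ] :=
        div_le_div_of_nonneg_left (mul_nonneg (hD i).le (sq_nonneg _)) hpos hVar
    _ = (∫ ω, Z ω ∂μ) ^ 2 / Var[Z; μ] := by rw [hmean, mul_pow, Real.sq_sqrt (hD i).le]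

end GraphFilter

/-- Theorem 3, SYM filter: lower bound on the squared inverse coefficient of
variation `R = (E[Z])²/Var[Z]` for the linearized symmetric-normalized GNN output at node
`i`, in terms of the degree-discounted prediction homogeneities and collision
probabilities. -/
theorem sym_inverse_cv_bound {Ω : Type*} [MeasurableSpace Ω] (μ : Measure Ω)
    [IsProbabilityMeasure μ] {N d : ℕ}
    (A : Matrix (Fin N) (Fin N) ℝ)
    (hA01 : ∀ i j, A i j = 0 ∨ A i j = 1)
    (hAsymm : A.IsSymm)
    (deg : Fin N → ℝ) (hdeg : ∀ i, deg i = ∑ j, A i j)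
    (hdegpos : ∀ i, 0 < deg i)
    (Prw : Matrix (Fin N) (Fin N) ℝ) (hPrw : ∀ i j, Prw i j = A i j / deg i)
    (Psym : Matrix (Fin N) (Fin N) ℝ)
    (hPsym : ∀ i j, Psym i j = A i j / (Real.sqrt (deg i) * Real.sqrt (deg j)))
    (X : Fin N → Ω → Fin d → ℝ) (hXmeas : ∀ j, Measurable (X j))
    (hXindep : iIndepFun X μ)
    (i : Fin N) (L : ℕ) (w : ℕ → Fin d → ℝ) (M : ℝ) (hM : 0 ≤ M)
    (hL2 : ∀ (j : Fin N) (l : ℕ), l ≤ L →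
      MemLp (fun ω => ∑ k, X j ω k * w l k) 2 μ)
    (hvar : ∀ (j : Fin N) (l : ℕ), l ≤ L →
      variance (fun ω => ∑ k, X j ω k * w l k) μ ≤ M)
    (Z : Ω → ℝ)
    (hZ : ∀ ω, Z ω = ∑ l ∈ range (L + 1), ∑ j, (Psym ^ l) i j * ∑ k, X j ω k * w l k)
    (β : ℕ → ℝ)
    (hβ : ∀ l, β l = ∑ j, (Prw ^ l) i j * (Real.sqrt (deg j))⁻¹ *
      ∫ ω, (∑ k, X j ω k * w l k) ∂μ)
    (α : ℕ → ℝ)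
    (hα : ∀ l, α l = ∑ j, (deg j)⁻¹ * ((Prw ^ l) i j) ^ 2) :
    (∫ ω, Z ω ∂μ) = Real.sqrt (deg i) * ∑ l ∈ range (L + 1), β l ∧
    variance Z μ ≤ deg i * M * (L + 1 : ℝ) * ∑ l ∈ range (L + 1), α l ∧
    (0 < M → 0 < variance Z μ →
      (∫ ω, Z ω ∂μ) ^ 2 / variance Z μ ≥
        (∑ l ∈ range (L + 1), β l) ^ 2 /
          (M * (L + 1 : ℝ) * ∑ l ∈ range (L + 1), α l)) := by
  obtain rfl := Matrix.ext hPrw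
  obtain rfl := Matrix.ext hPsym
  obtain rfl := funext hZ
  obtain rfl := funext hβ
  obtain rfl := funext hα
  have hscoreL2 : ∀ l ∈ range (L + 1), ∀ j, MemLp (fun ω ↦ ∑ k, X j ω k * w l k) 2 μ :=
    fun l hl j ↦ hL2 j l (mem_range_succ_iff.1 hl)
  have hscore (l : ℕ) : Measurable fun x : Fin d → ℝ ↦ ∑ k, x k * w l k := by fun_prop
  have hmain := sym_inverse_cv_bound_general (A := A) hdegpos i hscoreL2
    (fun l hl ↦ pairwise_uncorrelated_comp_of_iIndepFun hXindep (hscore l) (hscoreL2 l hl))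
    (fun l hl j ↦ hvar j l (mem_range_succ_iff.1 hl))
  rw [card_range, Nat.cast_succ] at hmain
  exact ⟨hmain.1, hmain.2.1, fun _ ↦ hmain.2.2⟩
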